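/- For all real numbers x ≥ 0 and 0 < p < 1, the normalization constant of the continuous binomial distribution is A_{x,p} = ∫_{0}^{x} {x choose s} p^s (1−p)^{x−s} ds = 2 (p(1−p))^{x/2} [ cosh((x/2)√(4 + L²)) − cosh((x/2) L) + (2/√(4 + L²)) sinh((x/2)√(4 + L²)) ], where L = log(p/(1−p)). -/

import Mathlib

/-- The continuous binomial coefficient `{x choose s}`. -/
noncomputable def cbinom (x s : ℝ) : ℝ :=
  ∑' n : ℕ, (s * (x - s)) ^ n *
    (2 / ((n.factorial : ℝ)) ^ 2 + x / ((n.factorial : ℝ) * ((n + 1).factorial : ℝ)))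

/-!
Substitute `x = 2t`, `s = t + u`. The weight becomes a constant times `exp (L * u)`, and the
coefficient becomes `2 C₀(t² - u²) + 2t C₁(t² - u²)` with `C_ν(y) = ∑ yⁿ / (n! (n + ν)!)`; being
even in `u`, it only sees the part `cosh (L * u)` of the exponential. Expanding `C_ν` and `cosh`
into power series and integrating the Cauchy product termwise reduces everything to the moments
`∫ (t² - u²)ⁿ u²ᵏ` over `[-t, t]`, whose factorials turn each diagonal `n + k = m` into a binomial
expansion of `(4 + L²)ᵐ` (for `ν = 0`) or of `(4 + L²)ᵐ⁺¹ - (L²)ᵐ⁺¹` (for `ν = 1`).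
What is left are the power series of `sinh` and `cosh` at `t * √(4 + L²)`, minus that of `cosh` at
`t * L`.
-/

open MeasureTheory Set Finset Real
open scoped Nat Interval

section BinomialSums

variable {K : Type*} [Field K] [CharZero K]

lemma sum_antidiagonal_pow_div_factorial (a b : K) (m : ℕ) :
    ∑ i ∈ antidiagonal m, a ^ i.1 / (i.1)! * (b ^ i.2 / (i.2)!) = (a + b) ^ m / m ! := by
  rw [(Commute.all a b).add_pow', sum_div]
  refine sum_congr rfl fun ⟨n, k⟩ hnk ↦ ?_
  obtain rfl : n + k = m := mem_antidiagonal.1 hnk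
  have : ((n + k)! : K) ≠ 0 := mod_cast (n + k).factorial_ne_zero
  rw [nsmul_eq_mul, Nat.cast_add_choose]
  field_simp

lemma sum_antidiagonal_pow_succ_div_factorial (a b : K) (m : ℕ) :
    ∑ i ∈ antidiagonal m, a ^ (i.1 + 1) / (i.1 + 1)! * (b ^ i.2 / (i.2)!) =
      ((a + b) ^ (m + 1) - b ^ (m + 1)) / (m + 1)! := by
  have h := sum_antidiagonal_pow_div_factorial a b (m + 1)
  rw [Finset.Nat.sum_antidiagonal_succ] at h
  simp only [pow_zero, Nat.factorial_zero, Nat.cast_one, div_one, one_mul] at h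
  rw [sub_div, ← h, add_sub_cancel_left]

end BinomialSums

section SymmetricIntegrals

lemma intervalIntegral_eq_zero_of_odd {E : Type*} [NormedAddCommGroup E] [NormedSpace ℝ E]
    {f : ℝ → E} (hf : f.Odd) (t : ℝ) : ∫ u in (-t)..t, f u = 0 := by
  have h := intervalIntegral.integral_comp_neg (a := -t) (b := t) f
  simp only [hf _, neg_neg, intervalIntegral.integral_neg] at h
  have := IsAddTorsionFree.of_isTorsionFree ℝ E
  exact self_eq_neg.1 h.symm

lemma integral_mul_exp_eq_integral_mul_cosh_of_even {f : ℝ → ℝ} {t : ℝ}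
    (hf : IntervalIntegrable f volume (-t) t) (hf_even : f.Even) (L : ℝ) :
    ∫ u in (-t)..t, f u * exp (L * u) = ∫ u in (-t)..t, f u * cosh (L * u) := by
  have hodd : (fun u ↦ f u * sinh (L * u)).Odd := fun u ↦ by
    simp only [hf_even u, mul_neg, sinh_neg]
  simp only [← cosh_add_sinh, mul_add]
  rw [intervalIntegral.integral_add (hf.mul_continuousOn (by fun_prop))
    (hf.mul_continuousOn (by fun_prop)), intervalIntegral_eq_zero_of_odd hodd, add_zero]

lemma abs_le_abs_of_mem_uIoc_neg {t u : ℝ} (hu : u ∈ Ι (-t) t) : |u| ≤ |t| := by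
  rcases mem_uIoc.1 hu with ⟨hl, hr⟩ | ⟨hl, hr⟩
  · exact abs_le_abs hr (by linarith)
  · exact abs_le.2 ⟨(neg_abs_le t).trans hl.le, hr.trans (neg_le_abs t)⟩

lemma integral_sq_sub_sq_pow_succ_mul_even_pow (t : ℝ) (n k : ℕ) :
    ∫ u in (-t)..t, (t ^ 2 - u ^ 2) ^ (n + 1) * u ^ (2 * k) =
      2 * (n + 1) / (2 * k + 1) * ∫ u in (-t)..t, (t ^ 2 - u ^ 2) ^ n * u ^ (2 * (k + 1)) := by
  have hderiv_left (u : ℝ) : HasDerivAt (fun u ↦ (t ^ 2 - u ^ 2) ^ (n + 1))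
      (-(2 * (n + 1)) * ((t ^ 2 - u ^ 2) ^ n * u)) u := by
    refine (((hasDerivAt_pow 2 u).const_sub (t ^ 2)).fun_pow (n + 1)).congr_deriv ?_
    push_cast
    ring_nf
  have hderiv_right (u : ℝ) : HasDerivAt (fun u : ℝ ↦ u ^ (2 * k + 1) / (2 * k + 1))
      (u ^ (2 * k)) u := by
    refine ((hasDerivAt_pow (2 * k + 1) u).div_const (2 * k + 1 : ℝ)).congr_deriv ?_
    push_cast
    field_simp
  rw [intervalIntegral.integral_mul_deriv_eq_deriv_mul (fun u _ ↦ hderiv_left u)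
      (fun u _ ↦ hderiv_right u) (Continuous.intervalIntegrable (by fun_prop) _ _)
      (Continuous.intervalIntegrable (by fun_prop) _ _),
    neg_sq, sub_self, zero_pow n.succ_ne_zero, zero_mul, zero_mul, sub_self, zero_sub,
    ← intervalIntegral.integral_neg, ← intervalIntegral.integral_const_mul]
  congr with u
  ring

lemma integral_sq_sub_sq_pow_mul_even_pow (t : ℝ) (n k : ℕ) :
    ∫ u in (-t)..t, (t ^ 2 - u ^ 2) ^ n * u ^ (2 * k) =
      2 * t ^ (2 * (n + k) + 1) * 4 ^ n * n ! * (n + k)! * (2 * k)! /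
        (k ! * (2 * (n + k) + 1)!) := by
  induction n generalizing k with
  | zero =>
    simp only [pow_zero, one_mul, integral_pow, zero_add, Odd.neg_pow ⟨k, rfl⟩,
      Nat.factorial_succ (2 * k), Nat.factorial_zero]
    push_cast
    field_simp
    ring
  | succ n ih =>
    rw [integral_sq_sub_sq_pow_succ_mul_even_pow, ih, show n + 1 + k = n + (k + 1) by ring,
      show (2 * (k + 1))! = (2 * k + 2) * ((2 * k + 1) * (2 * k)!) from rfl,
      Nat.factorial_succ k, Nat.factorial_succ n]
    push_cast
    field_simp
    ring

end SymmetricIntegrals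

lemma hasSum_integral_sum_antidiagonal_mul {R : Type*} [NormedRing R] [NormedSpace ℝ R]
    [CompleteSpace R] {F G : ℕ → ℝ → R} {α β : ℕ → ℝ} {l r : ℝ}
    (hF : ∀ n, Continuous (F n)) (hG : ∀ n, Continuous (G n))
    (hα : Summable α) (hβ : Summable β)
    (hFα : ∀ n, ∀ u ∈ Ι l r, ‖F n u‖ ≤ α n) (hGβ : ∀ n, ∀ u ∈ Ι l r, ‖G n u‖ ≤ β n) :
    HasSum (fun m ↦ ∑ i ∈ antidiagonal m, ∫ u in l..r, F i.1 u * G i.2 u)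
      (∫ u in l..r, (∑' n, F n u) * ∑' n, G n u) := by
  have hbound (m : ℕ) (u : ℝ) (hu : u ∈ Ι l r) :
      ‖∑ i ∈ antidiagonal m, F i.1 u * G i.2 u‖ ≤ ∑ i ∈ antidiagonal m, α i.1 * β i.2 :=
    norm_sum_le_of_le _ fun i _ ↦ norm_mul_le_of_le (hFα _ u hu) (hGβ _ u hu)
  have hsum (u : ℝ) (hu : u ∈ Ι l r) :
      HasSum (fun m ↦ ∑ i ∈ antidiagonal m, F i.1 u * G i.2 u)
        ((∑' n, F n u) * ∑' n, G n u) := by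
    have hFu : Summable fun n ↦ ‖F n u‖ := hα.of_nonneg_of_le (fun _ ↦ norm_nonneg _) (hFα · u hu)
    have hGu : Summable fun n ↦ ‖G n u‖ := hβ.of_nonneg_of_le (fun _ ↦ norm_nonneg _) (hGβ · u hu)
    rw [tsum_mul_tsum_eq_tsum_sum_antidiagonal_of_summable_norm hFu hGu]
    exact (summable_norm_sum_mul_antidiagonal_of_summable_norm hFu hGu).of_norm.hasSum
  have hαβ : Summable fun m ↦ ∑ i ∈ antidiagonal m, α i.1 * β i.2 :=
    (summable_norm_sum_mul_antidiagonal_of_summable_norm hα.norm hβ.norm).of_norm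
  have hterm (m : ℕ) : ∫ u in l..r, ∑ i ∈ antidiagonal m, F i.1 u * G i.2 u =
      ∑ i ∈ antidiagonal m, ∫ u in l..r, F i.1 u * G i.2 u :=
    intervalIntegral.integral_finsetSum fun i _ ↦
      ((hF i.1).mul (hG i.2)).intervalIntegrable _ _
  simp only [← hterm]
  exact intervalIntegral.hasSum_integral_of_dominated_convergence
    (fun m _ ↦ ∑ i ∈ antidiagonal m, α i.1 * β i.2)
    (fun m ↦ Continuous.aestronglyMeasurable (by fun_prop))
    (fun m ↦ .of_forall (hbound m)) (.of_forall fun _ _ ↦ hαβ)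
    intervalIntegrable_const (.of_forall hsum)

/-- The Bessel–Clifford function `C_ν` of natural order, with `I_ν(z) = (z / 2) ^ ν * C_ν(z² / 4)`.
Unlike `I_ν(2√y)`, it is entire in `y`, so it expresses `cbinom` also where `s * (x - s) ≤ 0`. -/
noncomputable def besselClifford (ν : ℕ) (y : ℝ) : ℝ :=
  ∑' n : ℕ, y ^ n / (n ! * (n + ν)!)

section BesselClifford

variable (ν : ℕ)

lemma abs_pow_div_factorial_mul_factorial_le {y R : ℝ} (hy : |y| ≤ R) (n : ℕ) :
    |y ^ n / (n ! * (n + ν)!)| ≤ R ^ n / n ! := by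
  have hfac : (n ! : ℝ) ≤ n ! * (n + ν)! :=
    le_mul_of_one_le_right (by positivity) (mod_cast (n + ν).factorial_pos)
  rw [abs_div, abs_pow, abs_of_pos (a := (n ! * (n + ν)! : ℝ)) (by positivity)]
  have hR : 0 ≤ R := (abs_nonneg y).trans hy
  gcongr

lemma summable_besselClifford (y : ℝ) : Summable fun n : ℕ ↦ y ^ n / (n ! * (n + ν)!) :=
  .of_norm_bounded (Real.summable_pow_div_factorial |y|) fun n ↦
    abs_pow_div_factorial_mul_factorial_le ν le_rfl n

@[fun_prop]
lemma continuous_besselClifford : Continuous (besselClifford ν) := by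
  refine continuous_iff_continuousAt.2 fun y ↦ ?_
  refine ContinuousOn.continuousAt (s := {z | |z| ≤ |y| + 1}) ?_ ?_
  · exact continuousOn_tsum (fun n ↦ by fun_prop) (Real.summable_pow_div_factorial (|y| + 1))
      fun n z hz ↦ abs_pow_div_factorial_mul_factorial_le ν hz n
  · exact continuous_abs.continuousAt.eventually_le_const (lt_add_one |y|)

lemma cbinom_eq_besselClifford (x s : ℝ) :
    cbinom x s = 2 * besselClifford 0 (s * (x - s)) + x * besselClifford 1 (s * (x - s)) := by
  simp only [besselClifford, ← tsum_mul_left]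
  rw [← ((summable_besselClifford 0 _).mul_left 2).tsum_add
    ((summable_besselClifford 1 _).mul_left x), cbinom]
  refine tsum_congr fun n ↦ ?_
  rw [add_zero]
  ring

lemma integral_besselClifford_term_mul_cosh_term (t L : ℝ) (n k : ℕ) :
    ∫ u in (-t)..t, (t ^ 2 - u ^ 2) ^ n / (n ! * (n + ν)!) * ((L * u) ^ (2 * k) / (2 * k)!) =
      2 * t ^ (2 * (n + k) + 1) * (n + k)! / (2 * (n + k) + 1)! *
        (4 ^ n / (n + ν)! * ((L ^ 2) ^ k / k !)) := by
  have hfactor (u : ℝ) :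
      (t ^ 2 - u ^ 2) ^ n / (n ! * (n + ν)!) * ((L * u) ^ (2 * k) / (2 * k)!) =
        (L ^ 2) ^ k / (n ! * (n + ν)! * (2 * k)!) * ((t ^ 2 - u ^ 2) ^ n * u ^ (2 * k)) := by
    rw [mul_pow, pow_mul L]
    ring
  simp only [hfactor, intervalIntegral.integral_const_mul, integral_sq_sub_sq_pow_mul_even_pow]
  field_simp

lemma hasSum_integral_besselClifford_mul_cosh (t L : ℝ) :
    HasSum (fun m : ℕ ↦ 2 * t ^ (2 * m + 1) * m ! / (2 * m + 1)! *
        ∑ i ∈ antidiagonal m, 4 ^ i.1 / (i.1 + ν)! * ((L ^ 2) ^ i.2 / (i.2)!))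
      (∫ u in (-t)..t, besselClifford ν (t ^ 2 - u ^ 2) * cosh (L * u)) := by
  have hF_bound (n : ℕ) (u : ℝ) (hu : u ∈ Ι (-t) t) :
      ‖(t ^ 2 - u ^ 2) ^ n / (n ! * (n + ν)! : ℝ)‖ ≤ (t ^ 2) ^ n / n ! := by
    have hsq : u ^ 2 ≤ t ^ 2 := sq_le_sq.2 (abs_le_abs_of_mem_uIoc_neg hu)
    refine abs_pow_div_factorial_mul_factorial_le ν ?_ n
    rw [abs_of_nonneg (sub_nonneg.2 hsq)]
    exact sub_le_self _ (sq_nonneg u)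
  have hG_bound (k : ℕ) (u : ℝ) (hu : u ∈ Ι (-t) t) :
      ‖(L * u) ^ (2 * k) / (2 * k)!‖ ≤ |L * t| ^ (2 * k) / (2 * k)! := by
    have hLu : |L * u| ≤ |L * t| := by
      rw [abs_mul, abs_mul]
      exact mul_le_mul_of_nonneg_left (abs_le_abs_of_mem_uIoc_neg hu) (abs_nonneg L)
    rw [norm_eq_abs, abs_div, abs_pow, Nat.abs_cast]
    gcongr
  have h := hasSum_integral_sum_antidiagonal_mul (fun n ↦ by fun_prop) (fun k ↦ by fun_prop)
    (Real.summable_pow_div_factorial (t ^ 2)) (hasSum_cosh |L * t|).summable hF_bound hG_bound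
  simp only [← cosh_eq_tsum] at h
  refine h.congr_fun fun m ↦ ?_
  rw [mul_sum]
  refine sum_congr rfl fun ⟨n, k⟩ hnk ↦ ?_
  obtain rfl : n + k = m := mem_antidiagonal.1 hnk
  exact (integral_besselClifford_term_mul_cosh_term ν t L n k).symm

lemma integral_besselClifford_zero_mul_cosh (t L : ℝ) :
    ∫ u in (-t)..t, besselClifford 0 (t ^ 2 - u ^ 2) * cosh (L * u) =
      2 / √(4 + L ^ 2) * sinh (t * √(4 + L ^ 2)) := by
  have hq : √(4 + L ^ 2) ^ 2 = 4 + L ^ 2 := sq_sqrt (by positivity)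
  have hq_ne : √(4 + L ^ 2) ≠ 0 := by positivity
  set q := √(4 + L ^ 2)
  refine (hasSum_integral_besselClifford_mul_cosh 0 t L).unique ?_
  refine ((hasSum_sinh (t * q)).mul_left (2 / q)).congr_fun fun m ↦ ?_
  simp only [add_zero, sum_antidiagonal_pow_div_factorial]
  rw [← hq, mul_pow, ← pow_mul, pow_succ q]
  field_simp

lemma mul_integral_besselClifford_one_mul_cosh (t L : ℝ) :
    t * ∫ u in (-t)..t, besselClifford 1 (t ^ 2 - u ^ 2) * cosh (L * u) =
      cosh (t * √(4 + L ^ 2)) - cosh (t * L) := by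
  have hq : √(4 + L ^ 2) ^ 2 = 4 + L ^ 2 := sq_sqrt (by positivity)
  set q := √(4 + L ^ 2)
  have hcosh : HasSum (fun m : ℕ ↦
      (t * q) ^ (2 * (m + 1)) / (2 * (m + 1))! - (t * L) ^ (2 * (m + 1)) / (2 * (m + 1))!)
      (cosh (t * q) - cosh (t * L)) := by
    have h := (hasSum_nat_add_iff' 1).2 ((hasSum_cosh (t * q)).sub (hasSum_cosh (t * L)))
    simpa using h
  refine ((hasSum_integral_besselClifford_mul_cosh 1 t L).mul_left t).unique ?_
  refine hcosh.congr_fun fun m ↦ ?_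
  have hdiag : ∑ i ∈ antidiagonal m, (4 : ℝ) ^ i.1 / (i.1 + 1)! * ((L ^ 2) ^ i.2 / (i.2)!) =
      (q ^ (2 * (m + 1)) - L ^ (2 * (m + 1))) / (4 * (m + 1)!) := by
    rw [pow_mul, hq, pow_mul, mul_comm, ← div_div, ← sum_antidiagonal_pow_succ_div_factorial,
      sum_div]
    refine sum_congr rfl fun i _ ↦ ?_
    ring
  rw [hdiag, mul_pow, mul_pow, show (2 * (m + 1))! = (2 * m + 2) * (2 * m + 1)! from rfl,
    Nat.factorial_succ m]
  push_cast
  field_simp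
  ring

end BesselClifford

lemma integral_cbinom_mul_exp (t L : ℝ) :
    ∫ u in (-t)..t, cbinom (2 * t) (t + u) * exp (L * u) =
      2 * (cosh (t * √(4 + L ^ 2)) - cosh (t * L) +
        2 / √(4 + L ^ 2) * sinh (t * √(4 + L ^ 2))) := by
  have hcbinom (u : ℝ) : cbinom (2 * t) (t + u) =
      2 * besselClifford 0 (t ^ 2 - u ^ 2) + 2 * t * besselClifford 1 (t ^ 2 - u ^ 2) := by
    rw [cbinom_eq_besselClifford, show (t + u) * (2 * t - (t + u)) = t ^ 2 - u ^ 2 by ring]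
  have heven : (fun u ↦ cbinom (2 * t) (t + u)).Even := fun u ↦ by
    simp only [hcbinom, neg_sq]
  have hcont : Continuous fun u ↦ cbinom (2 * t) (t + u) := by
    simp only [hcbinom]
    fun_prop
  rw [integral_mul_exp_eq_integral_mul_cosh_of_even (hcont.intervalIntegrable _ _) heven]
  simp only [hcbinom, add_mul, mul_assoc]
  rw [intervalIntegral.integral_add (Continuous.intervalIntegrable (by fun_prop) _ _)
      (Continuous.intervalIntegrable (by fun_prop) _ _)]
  simp only [intervalIntegral.integral_const_mul]
  rw [integral_besselClifford_zero_mul_cosh, mul_integral_besselClifford_one_mul_cosh]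
  ring

lemma rpow_add_mul_rpow_sub {a b : ℝ} (ha : 0 < a) (hb : 0 < b) (c u : ℝ) :
    a ^ (c + u) * b ^ (c - u) = (a * b) ^ c * exp (log (a / b) * u) := by
  rw [rpow_def_of_pos ha, rpow_def_of_pos hb, rpow_def_of_pos (mul_pos ha hb),
    log_mul ha.ne' hb.ne', log_div ha.ne' hb.ne', ← exp_add, ← exp_add]
  ring_nf

theorem cbinom_normalization_general (x : ℝ) {a b : ℝ} (ha : 0 < a) (hb : 0 < b) :
    ∫ s in (0 : ℝ)..x, cbinom x s * a ^ s * b ^ (x - s) =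
      2 * (a * b) ^ (x / 2) *
        (cosh (x / 2 * √(4 + log (a / b) ^ 2)) - cosh (x / 2 * log (a / b)) +
          2 / √(4 + log (a / b) ^ 2) * sinh (x / 2 * √(4 + log (a / b) ^ 2))) := by
  obtain ⟨t, rfl⟩ : ∃ t, x = 2 * t := ⟨x / 2, by ring⟩
  have hshift := intervalIntegral.integral_comp_add_left (a := -t) (b := t)
    (fun s ↦ cbinom (2 * t) s * a ^ s * b ^ (2 * t - s)) t
  have hweight (u : ℝ) : cbinom (2 * t) (t + u) * a ^ (t + u) * b ^ (2 * t - (t + u)) =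
      (a * b) ^ t * (cbinom (2 * t) (t + u) * exp (log (a / b) * u)) := by
    rw [mul_assoc, show 2 * t - (t + u) = t - u by ring, rpow_add_mul_rpow_sub ha hb,
      mul_left_comm]
  simp only [hweight, intervalIntegral.integral_const_mul, integral_cbinom_mul_exp] at hshift
  rw [add_neg_cancel, ← two_mul] at hshift
  rw [← hshift, mul_div_cancel_left₀ t two_ne_zero]
  ring

theorem cbinom_normalization (x p : ℝ) (hx : 0 ≤ x) (hp : 0 < p) (hp1 : p < 1) :
    (∫ s in (0 : ℝ)..x, cbinom x s * p ^ s * (1 - p) ^ (x - s)) =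
      2 * (p * (1 - p)) ^ (x / 2) *
        (Real.cosh (x / 2 * Real.sqrt (4 + Real.log (p / (1 - p)) ^ 2)) -
          Real.cosh (x / 2 * Real.log (p / (1 - p))) +
          2 / Real.sqrt (4 + Real.log (p / (1 - p)) ^ 2) *
            Real.sinh (x / 2 * Real.sqrt (4 + Real.log (p / (1 - p)) ^ 2))) :=
  cbinom_normalization_general x hp (sub_pos.2 hp1)
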